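/- Assume σ ∈ (0, σ₀) and let S_ob := {ξ ∈ ℝ² : v₁∞ξ₁ + v₃∞ = v₂σξ₂ + v₃σ}. Then: (i) C∞ ∩ Cσ = C∞ ∩ S_ob, and this set consists of exactly one point P₁; at P₁ the line S_ob is tangent to C∞, and the gradients at P₁ of the defining functions (v₁∞ξ₁+v₃∞)² − B∞(1+|ξ|²) and (v₂σξ₂+v₃σ)² − B∞(1+|ξ|²) are nonzero and parallel (so C∞ and Cσ are tangent at P₁); (ii) every point (0,t) ∈ Cσ with t > 0 satisfies t < √(c∞² − v₁∞²)/√B∞, i.e. the intersection of Cσ with the positive ξ₂-axis lies strictly below the point P₀ := (0, √(c∞² − v₁∞²)/√B∞) where C∞ meets the positive ξ₂-axis. -/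

import Mathlib

open Real Set

set_option maxHeartbeats 1600000 in
/-- Abstract version: `N = (n1,n2,n3)` is the unit normal of the shock plane, `V·N = c`. -/
theorem sonic_core (v1 v3 n1 n2 n3 c B μ w2 w3 : ℝ)
    (hN : n1 ^ 2 + n2 ^ 2 + n3 ^ 2 = 1) (hVN : v1 * n1 + v3 * n3 = c)
    (hB : B = v1 ^ 2 + v3 ^ 2 - c ^ 2) (hB0 : 0 < B) (hc : 0 < c)
    (hμ : 0 < μ) (hμc : μ < c) (hv1 : v1 = μ * n1) (hw2 : w2 = -μ * n2)
    (hw3 : w3 = v3 - μ * n3) (hn1 : 0 < n1) (hn2 : n2 < 0) (hn3 : 0 < n3)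
    (hT3 : 0 < v3 - c * n3) (hne : B * (n2 ^ 2 + n3 ^ 2) ≠ v3 ^ 2 * n2 ^ 2) (hcv : v1 < c)
    (hv10 : 0 < v1)
    (Cinf Cσ Sob : Set (ℝ × ℝ))
    (hCinf : Cinf = {ξ : ℝ × ℝ | (v1 * ξ.1 + v3) ^ 2 = B * (1 + ξ.1 ^ 2 + ξ.2 ^ 2)})
    (hCσ : Cσ = {ξ : ℝ × ℝ | (w2 * ξ.2 + w3) ^ 2 = B * (1 + ξ.1 ^ 2 + ξ.2 ^ 2)})
    (hSob : Sob = {ξ : ℝ × ℝ | v1 * ξ.1 + v3 = w2 * ξ.2 + w3}) :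
    (Cinf ∩ Cσ = Cinf ∩ Sob) ∧
    (∃! P : ℝ × ℝ, P ∈ Cinf ∩ Cσ) ∧
    (∀ P ∈ Cinf ∩ Cσ,
      ((2 * v1 * (v1 * P.1 + v3) - 2 * B * P.1, -(2 * B * P.2)) ≠ ((0 : ℝ), (0 : ℝ))) ∧
      ((-(2 * B * P.1), 2 * w2 * (w2 * P.2 + w3) - 2 * B * P.2) ≠ ((0 : ℝ), (0 : ℝ))) ∧
      (v1 * (-(2 * B * P.2)) = -w2 * (2 * v1 * (v1 * P.1 + v3) - 2 * B * P.1)) ∧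
      ((2 * v1 * (v1 * P.1 + v3) - 2 * B * P.1) *
          (2 * w2 * (w2 * P.2 + w3) - 2 * B * P.2)
        = (-(2 * B * P.2)) * (-(2 * B * P.1)))) ∧
    (∀ t : ℝ, 0 < t → ((0, t) : ℝ × ℝ) ∈ Cσ →
      t < Real.sqrt (c ^ 2 - v1 ^ 2) / Real.sqrt B) := by
  have hw2pos : 0 < w2 := by rw [hw2]; nlinarith
  have hw3pos : 0 < w3 := by rw [hw3]; nlinarith
  -- decomposition of `V'·X`
  have hW : ∀ x y : ℝ, w2 * y + w3 = v1 * x + v3 - μ * (n1 * x + n2 * y + n3) := by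
    intro x y; rw [hw2, hw3, hv1]; ring
  have hBT : B = (v1 - c * n1) ^ 2 + (c * n2) ^ 2 + (v3 - c * n3) ^ 2 := by
    rw [hB]; linear_combination (-c ^ 2) * hN + 2 * c * hVN
  have hTN : (v1 - c * n1) * n1 + (-c * n2) * n2 + (v3 - c * n3) * n3 = 0 := by
    linear_combination hVN - c * hN
  have hLag : ∀ x y : ℝ, B * (1 + x ^ 2 + y ^ 2)
      = (v1 * x + v3 - c * (n1 * x + n2 * y + n3)) ^ 2
        + ((v1 - c * n1) - x * (v3 - c * n3)) ^ 2
        + ((-c * n2) - y * (v3 - c * n3)) ^ 2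
        + ((v1 - c * n1) * y - x * (-c * n2)) ^ 2 := by
    intro x y; rw [hBT]; ring
  -- Gram determinant inequality
  have hGram : ∀ x y : ℝ, (v1 * x + v3 - c * (n1 * x + n2 * y + n3)) ^ 2
      + B * (n1 * x + n2 * y + n3) ^ 2 ≤ B * (1 + x ^ 2 + y ^ 2) := by
    intro x y
    obtain ⟨a, ha⟩ : ∃ a, a = v1 - c * n1 := ⟨_, rfl⟩
    obtain ⟨b, hb⟩ : ∃ b, b = -c * n2 := ⟨_, rfl⟩
    obtain ⟨d, hd⟩ : ∃ d, d = v3 - c * n3 := ⟨_, rfl⟩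
    have hBT' : B = a ^ 2 + b ^ 2 + d ^ 2 := by rw [hBT, ha, hb, hd]; ring
    have hTN' : a * n1 + b * n2 + d * n3 = 0 := by rw [ha, hb, hd]; exact hTN
    have hTX : v1 * x + v3 - c * (n1 * x + n2 * y + n3) = a * x + b * y + d := by
      rw [ha, hb, hd]; ring
    rw [hTX, hBT']
    have hG : (a ^ 2 + b ^ 2 + d ^ 2) * (1 + x ^ 2 + y ^ 2)
        - (a * x + b * y + d) ^ 2 - (a ^ 2 + b ^ 2 + d ^ 2) * (n1 * x + n2 * y + n3) ^ 2
        = (a * (n2 - n3 * y) - b * (n1 - n3 * x) + d * (n1 * y - n2 * x)) ^ 2 := by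
      have e : (a * (n2 - n3 * y) - b * (n1 - n3 * x) + d * (n1 * y - n2 * x)) ^ 2
        = (a ^ 2 + b ^ 2 + d ^ 2) * (n1 ^ 2 + n2 ^ 2 + n3 ^ 2) * (1 + x ^ 2 + y ^ 2)
          + 2 * (a * n1 + b * n2 + d * n3) * (n1 * x + n2 * y + n3) * (a * x + b * y + d)
          - (a ^ 2 + b ^ 2 + d ^ 2) * (n1 * x + n2 * y + n3) ^ 2
          - (n1 ^ 2 + n2 ^ 2 + n3 ^ 2) * (a * x + b * y + d) ^ 2
          - (1 + x ^ 2 + y ^ 2) * (a * n1 + b * n2 + d * n3) ^ 2 := by ring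
      rw [e, hN, hTN']; ring
    linarith [sq_nonneg (a * (n2 - n3 * y) - b * (n1 - n3 * x) + d * (n1 * y - n2 * x))]
  -- intersection points lie on the line
  have hline : ∀ x y : ℝ, (v1 * x + v3) ^ 2 = B * (1 + x ^ 2 + y ^ 2) →
      (w2 * y + w3) ^ 2 = B * (1 + x ^ 2 + y ^ 2) → n1 * x + n2 * y + n3 = 0 := by
    intro x y h1 h2
    have hg := hGram x y
    rw [hW x y] at h2
    generalize n1 * x + n2 * y + n3 = b at *
    generalize v1 * x + v3 = Z at *
    by_contra hb
    have hz : 2 * Z = μ * b := by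
      have : μ * b * (2 * Z - μ * b) = 0 := by linear_combination h1 - h2
      have h3 := (mul_eq_zero.mp this).resolve_left (mul_ne_zero hμ.ne' hb)
      linarith
    have hZ : Z = μ * b / 2 := by linarith
    have hb2 : 0 < b ^ 2 := by positivity
    rw [← h1, hZ] at hg
    have : (c * (c - μ) + B) * b ^ 2 ≤ 0 := by nlinarith
    have h4 : 0 < c * (c - μ) := mul_pos hc (by linarith)
    nlinarith [mul_pos (add_pos h4 hB0) hb2]
  have hpt : ∀ x y : ℝ, (v1 * x + v3) ^ 2 = B * (1 + x ^ 2 + y ^ 2) →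
      n1 * x + n2 * y + n3 = 0 →
      x * (v3 - c * n3) = v1 - c * n1 ∧ y * (v3 - c * n3) = -c * n2 := by
    intro x y h1 h2
    have hl := hLag x y
    rw [h2, ← h1] at hl
    have h5 := sq_nonneg ((v1 - c * n1) - x * (v3 - c * n3))
    have h6 := sq_nonneg ((-c * n2) - y * (v3 - c * n3))
    have h7 := sq_nonneg ((v1 - c * n1) * y - x * (-c * n2))
    have h8 : ((v1 - c * n1) - x * (v3 - c * n3)) ^ 2 = 0 := by linarith
    have h9 : ((-c * n2) - y * (v3 - c * n3)) ^ 2 = 0 := by linarith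
    have h8' := pow_eq_zero_iff (two_ne_zero) |>.mp h8
    have h9' := pow_eq_zero_iff (two_ne_zero) |>.mp h9
    constructor <;> linarith
  have heq : Cinf ∩ Cσ = Cinf ∩ Sob := by
    subst hCinf hCσ hSob
    ext ⟨x, y⟩
    simp only [mem_inter_iff, mem_setOf_eq]
    constructor
    · rintro ⟨h1, h2⟩
      refine ⟨h1, ?_⟩
      rw [hW x y, hline x y h1 h2]; ring
    · rintro ⟨h1, h2⟩
      exact ⟨h1, by rw [← h2, h1]⟩
  refine ⟨heq, ?_, ?_, ?_⟩
  · have hT3' := hT3.ne'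
    refine ⟨((v1 - c * n1) / (v3 - c * n3), (-c * n2) / (v3 - c * n3)), ?_, ?_⟩
    · have hb0 : n1 * ((v1 - c * n1) / (v3 - c * n3)) + n2 * ((-c * n2) / (v3 - c * n3)) + n3 = 0 := by
        rw [← sub_eq_zero] at hTN
        have : n1 * ((v1 - c * n1) / (v3 - c * n3)) + n2 * ((-c * n2) / (v3 - c * n3)) + n3
          = ((v1 - c * n1) * n1 + (-c * n2) * n2 + (v3 - c * n3) * n3) / (v3 - c * n3) := by
          field_simp
        rw [this, sub_eq_zero.mp hTN, zero_div]
      dsimp only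
      rw [heq]
      subst hCinf hSob
      simp only [mem_inter_iff, mem_setOf_eq]
      constructor
      · rw [hLag, hb0, div_mul_cancel₀ _ hT3', div_mul_cancel₀ _ hT3']; ring
      · rw [hW ((v1 - c * n1) / (v3 - c * n3)), hb0]; ring
    · rintro ⟨x, y⟩ hP
      subst hCinf hCσ
      obtain ⟨h1, h2⟩ := hP
      obtain ⟨e1, e2⟩ := hpt x y h1 (hline x y h1 h2)
      rw [Prod.mk.injEq, eq_div_iff hT3', eq_div_iff hT3']
      exact ⟨e1, e2⟩
  · rintro ⟨x, y⟩ hP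
    subst hCinf hCσ
    obtain ⟨h1, h2⟩ := hP
    have hb := hline x y h1 h2
    obtain ⟨e1, e2⟩ := hpt x y h1 hb
    simp only [mem_setOf_eq] at h1 h2
    dsimp only
    have hWe : w2 * y + w3 = v1 * x + v3 := by rw [hW x y, hb]; ring
    obtain ⟨a, ha⟩ : ∃ a, a = (v3 - c * n3)⁻¹ := ⟨_, rfl⟩
    have ha0 : 0 < a := by rw [ha]; positivity
    have haT : a * (v3 - c * n3) = 1 := by rw [ha]; exact inv_mul_cancel₀ hT3.ne'
    have hx : x = a * (v1 - c * n1) := by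
      rw [← e1]; linear_combination (-x) * haT
    have hy : y = a * (-c * n2) := by
      rw [← e2]; linear_combination (-y) * haT
    have hVX : v1 * x + v3 = a * B := by
      have : v1 * x + v3 = (v1 - c * n1) * x + (-c * n2) * y + (v3 - c * n3) := by
        linear_combination c * hb
      rw [this, hBT, hx, hy]
      linear_combination (-(v3 - c * n3)) * haT
    rw [hWe, hVX]
    have g1 : 2 * v1 * (a * B) - 2 * B * x = 2 * a * B * c * n1 := by rw [hx]; ring
    have g2 : -(2 * B * y) = 2 * a * B * c * n2 := by rw [hy]; ring
    have g3 : -(2 * B * x) = 2 * a * B * (c - μ) * n1 := by rw [hx, hv1]; ring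
    have g4 : 2 * w2 * (a * B) - 2 * B * y = 2 * a * B * (c - μ) * n2 := by rw [hy, hw2]; ring
    have hcμ : 0 < c - μ := by linarith
    rw [g1, g2, g3, g4]
    refine ⟨?_, ?_, ?_, ?_⟩
    · intro h
      have := (Prod.mk.inj h).1
      have h' : 0 < 2 * a * B * c * n1 := by positivity
      linarith
    · intro h
      have := (Prod.mk.inj h).1
      have h' : 0 < 2 * a * B * (c - μ) * n1 := by positivity
      linarith
    · rw [hw2, hv1]; ring
    · ring
  · intro t ht hmem
    subst hCσ
    simp only [mem_setOf_eq] at hmem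
    have hg := hGram 0 t
    have hWt := hW 0 t
    have hpos : 0 < w2 * t + w3 := by positivity
    have hlt : B * (1 + 0 ^ 2 + t ^ 2) < v3 ^ 2 := by
      rcases lt_trichotomy (n1 * 0 + n2 * t + n3) 0 with hb | hb | hb
      · exfalso
        have h1 : w2 * t + w3 < v1 * 0 + v3 - c * (n1 * 0 + n2 * t + n3) := by
          rw [hWt]; nlinarith
        have h2 : (w2 * t + w3) ^ 2 < (v1 * 0 + v3 - c * (n1 * 0 + n2 * t + n3)) ^ 2 := by
          gcongr
        have h3 : 0 ≤ B * (n1 * 0 + n2 * t + n3) ^ 2 := by positivity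
        linarith
      · exfalso
        rw [hWt, hb] at hmem
        apply hne
        have e : n3 = -(n2 * t) := by linarith
        rw [e]
        linear_combination (-n2 ^ 2) * hmem
      · rw [← hmem]
        have h1 : w2 * t + w3 < v3 := by rw [hWt]; nlinarith
        gcongr
    rw [← Real.sqrt_div' _ hB0.le]
    apply Real.lt_sqrt_of_sq_lt
    rw [lt_div_iff₀ hB0]
    nlinarith

set_option maxHeartbeats 1600000 in
/-- Lemma 2.2: for `σ ∈ (0, σ₀)`, the sonic circles `C∞` and `Cσ` intersect exactly in
one point `P₁`, which is their common tangency point, the intersection coincides with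
`C∞ ∩ S_ob`, the oblique shock line `S_ob` is tangent to `C∞` at `P₁` (its normal
`(v₁∞, −v₂σ)` is parallel to the gradient of the defining function of `C∞` there), and
the intersection of `Cσ` with the positive `ξ₂`-axis lies strictly below
`P₀ = (0, √(c∞²−v₁∞²)/√B∞)`. -/
theorem sonic_circles_tangent
    (ρinf qinf A cinf Binf α0 α v1 v3 σ0 σ qt αn qj v2σ v3σ : ℝ)
    (hρ : 0 < ρinf) (hA : 0 < A)
    (hc : cinf = Real.sqrt A / ρinf) (hq : cinf < qinf)
    (hB : Binf = qinf ^ 2 - cinf ^ 2)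
    (hα0 : α0 = Real.arcsin (cinf / qinf))
    (hα : 0 < α) (hαlt : α < α0)
    (hv1 : v1 = qinf * Real.sin α) (hv3 : v3 = qinf * Real.cos α)
    (hσ0 : σ0 = Real.arcsin (Real.sqrt Binf / v3))
    (hσ : 0 < σ) (hσlt : σ < σ0)
    (hqt : qt = Real.sqrt (v1 ^ 2 + v3 ^ 2 * Real.cos σ ^ 2))
    (hαn : αn = Real.arctan (Real.tan α / Real.cos σ))
    (hqj : qj = qt * Real.sqrt (qt ^ 2 - cinf ^ 2) /
        (Real.cos αn * (Real.sqrt (qt ^ 2 - cinf ^ 2) + cinf * Real.tan αn)))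
    (hv2σ : v2σ = v3 * Real.sin σ * Real.cos σ - qj * Real.sin σ)
    (hv3σ : v3σ = v3 * Real.sin σ ^ 2 + qj * Real.cos σ)
    (Cinf Cσ Sob : Set (ℝ × ℝ))
    (hCinf : Cinf = {ξ : ℝ × ℝ | (v1 * ξ.1 + v3) ^ 2 = Binf * (1 + ξ.1 ^ 2 + ξ.2 ^ 2)})
    (hCσ : Cσ = {ξ : ℝ × ℝ | (v2σ * ξ.2 + v3σ) ^ 2 = Binf * (1 + ξ.1 ^ 2 + ξ.2 ^ 2)})
    (hSob : Sob = {ξ : ℝ × ℝ | v1 * ξ.1 + v3 = v2σ * ξ.2 + v3σ}) :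
    (Cinf ∩ Cσ = Cinf ∩ Sob) ∧
    (∃! P : ℝ × ℝ, P ∈ Cinf ∩ Cσ) ∧
    (∀ P ∈ Cinf ∩ Cσ,
      -- the gradient of `(v₁∞ξ₁+v₃∞)² − B∞(1+|ξ|²)` at `P` is nonzero
      ((2 * v1 * (v1 * P.1 + v3) - 2 * Binf * P.1, -(2 * Binf * P.2)) ≠ ((0 : ℝ), (0 : ℝ))) ∧
      -- the gradient of `(v₂σξ₂+v₃σ)² − B∞(1+|ξ|²)` at `P` is nonzero
      ((-(2 * Binf * P.1), 2 * v2σ * (v2σ * P.2 + v3σ) - 2 * Binf * P.2) ≠ ((0 : ℝ), (0 : ℝ))) ∧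
      -- the normal `(v₁∞, −v₂σ)` of the line `S_ob` is parallel to the first gradient,
      -- i.e. `S_ob` is tangent to `C∞` at `P`
      (v1 * (-(2 * Binf * P.2)) = -v2σ * (2 * v1 * (v1 * P.1 + v3) - 2 * Binf * P.1)) ∧
      -- the two gradients are parallel, i.e. `C∞` and `Cσ` are tangent at `P`
      ((2 * v1 * (v1 * P.1 + v3) - 2 * Binf * P.1) *
          (2 * v2σ * (v2σ * P.2 + v3σ) - 2 * Binf * P.2)
        = (-(2 * Binf * P.2)) * (-(2 * Binf * P.1)))) ∧
    (∀ t : ℝ, 0 < t → ((0, t) : ℝ × ℝ) ∈ Cσ →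
      t < Real.sqrt (cinf ^ 2 - v1 ^ 2) / Real.sqrt Binf) := by
  have hc0 : 0 < cinf := by rw [hc]; positivity
  have hq0 : 0 < qinf := hc0.trans hq
  have hB0 : 0 < Binf := by rw [hB]; nlinarith
  have hαpi : α < π / 2 := by
    rw [hα0] at hαlt; exact hαlt.trans_le (Real.arcsin_le_pi_div_two _)
  have hσpi : σ < π / 2 := by
    rw [hσ0] at hσlt; exact hσlt.trans_le (Real.arcsin_le_pi_div_two _)
  have hsα : 0 < Real.sin α := Real.sin_pos_of_pos_of_lt_pi hα (by linarith [Real.pi_pos])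
  have hkα : 0 < Real.cos α := Real.cos_pos_of_mem_Ioo ⟨by linarith, hαpi⟩
  have hs : 0 < Real.sin σ := Real.sin_pos_of_pos_of_lt_pi hσ (by linarith [Real.pi_pos])
  have hk : 0 < Real.cos σ := Real.cos_pos_of_mem_Ioo ⟨by linarith, hσpi⟩
  have hv10 : 0 < v1 := by rw [hv1]; positivity
  have hv30 : 0 < v3 := by rw [hv3]; positivity
  have hv1c : v1 < cinf := by
    rw [hα0] at hαlt
    have := (Real.lt_arcsin_iff_sin_lt' ⟨by linarith, hαpi⟩).mp hαlt
    rw [lt_div_iff₀ hq0] at this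
    rw [hv1]; linarith
  have hsB : v3 ^ 2 * Real.sin σ ^ 2 < Binf := by
    rw [hσ0] at hσlt
    have := (Real.lt_arcsin_iff_sin_lt' ⟨by linarith, hσpi⟩).mp hσlt
    rw [lt_div_iff₀ hv30, Real.lt_sqrt (by positivity)] at this
    linarith [mul_pow (Real.sin σ) v3 2]
  have hqq : v1 ^ 2 + v3 ^ 2 = qinf ^ 2 := by
    rw [hv1, hv3]; linear_combination qinf ^ 2 * Real.sin_sq_add_cos_sq α
  have hsk := Real.sin_sq_add_cos_sq σ
  have htan : Real.tan α / Real.cos σ = v1 / (v3 * Real.cos σ) := by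
    rw [hv1, hv3, Real.tan_eq_sin_div_cos]; field_simp
  have hk1 : Real.cos σ ^ 2 ≤ 1 := by nlinarith [sq_nonneg (Real.sin σ)]
  clear hv1 hv3 hα0 hσ0 hαlt hσlt hc
  generalize Real.sin σ = s at *
  generalize Real.cos σ = k at *
  obtain ⟨u, hu⟩ : ∃ u, u = v3 * k := ⟨_, rfl⟩
  have hu0 : 0 < u := by rw [hu]; positivity
  have hQ0 : 0 < v1 ^ 2 + v3 ^ 2 * k ^ 2 := by positivity
  have hqt0 : 0 < qt := by rw [hqt]; exact Real.sqrt_pos.mpr hQ0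
  have hqt2 : qt ^ 2 = v1 ^ 2 + u ^ 2 := by
    rw [hqt, Real.sq_sqrt hQ0.le, hu]; ring
  have hRpos : 0 < qt ^ 2 - cinf ^ 2 := by
    rw [hqt2, hu]
    have : v3 ^ 2 * s ^ 2 + v3 ^ 2 * k ^ 2 = v3 ^ 2 := by rw [← mul_add, hsk, mul_one]
    nlinarith
  obtain ⟨R, hR⟩ : ∃ R, R = Real.sqrt (qt ^ 2 - cinf ^ 2) := ⟨_, rfl⟩
  have hR0 : 0 < R := by rw [hR]; exact Real.sqrt_pos.mpr hRpos
  have hR2 : R ^ 2 = qt ^ 2 - cinf ^ 2 := by rw [hR]; exact Real.sq_sqrt hRpos.le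
  have htn : Real.tan αn = v1 / u := by rw [hαn, Real.tan_arctan, htan, hu]
  have hcn : Real.cos αn = u / qt := by
    rw [hαn, Real.cos_arctan, htan, ← hu]
    have : 1 + (v1 / u) ^ 2 = (qt / u) ^ 2 := by
      rw [div_pow, div_pow, hqt2]; field_simp; ring
    rw [this, Real.sqrt_sq (by positivity), one_div_div]
  rw [← hR, htn, hcn] at hqj
  clear htn hcn hαn htan hR hqt
  obtain ⟨D, hD⟩ : ∃ D, D = u * R + cinf * v1 := ⟨_, rfl⟩
  obtain ⟨d, hd⟩ : ∃ d, d = cinf * u - v1 * R := ⟨_, rfl⟩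
  obtain ⟨Q, hQ⟩ : ∃ Q, Q = v1 ^ 2 + u ^ 2 := ⟨_, rfl⟩
  have hD0 : 0 < D := by rw [hD]; positivity
  have hQp : 0 < Q := by rw [hQ]; positivity
  have hRQ : R ^ 2 = Q - cinf ^ 2 := by rw [hR2, hqt2, hQ]
  have hd0 : 0 < d := by
    have h1 : (v1 * R) ^ 2 < (cinf * u) ^ 2 := by
      have : (cinf * u) ^ 2 - (v1 * R) ^ 2 = (cinf ^ 2 - v1 ^ 2) * Q := by
        rw [mul_pow, mul_pow, hRQ, hQ]; ring
      have h2 : 0 < cinf ^ 2 - v1 ^ 2 := by nlinarith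
      have := mul_pos h2 hQp
      linarith
    have := lt_of_pow_lt_pow_left₀ 2 (by positivity) h1
    rw [hd]; linarith
  have hqj' : qj = Q * R / D := by
    rw [hqj, hQ, ← hqt2, hD]; field_simp
  have hqju : qj = u - v1 * d / D := by
    rw [hqj', eq_sub_iff_add_eq, ← add_div, div_eq_iff hD0.ne', hQ, hD, hd]; ring
  have hDd : D ^ 2 + d ^ 2 = Q ^ 2 := by
    have : D ^ 2 + d ^ 2 = Q * (R ^ 2 + cinf ^ 2) := by rw [hD, hd, hQ]; ring
    rw [this, hRQ]; ring
  have hDu : v1 * D + u * d = cinf * Q := by rw [hD, hd, hQ]; ring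
  have hcD : cinf * D - v1 * Q = R * d := by
    rw [hD, hd]; linear_combination v1 * hRQ
  refine sonic_core v1 v3 (D / Q) (-(d * s) / Q) (d * k / Q) cinf Binf (v1 * Q / D) v2σ v3σ
    ?_ ?_ ?_ hB0 hc0 (by positivity) ?_ ?_ ?_ ?_ (by positivity) ?_ (by positivity) ?_ ?_ hv1c hv10
    Cinf Cσ Sob hCinf hCσ hSob
  · have : (D / Q) ^ 2 + (-(d * s) / Q) ^ 2 + (d * k / Q) ^ 2
        = (D ^ 2 + d ^ 2 * (s ^ 2 + k ^ 2)) / Q ^ 2 := by field_simp; ring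
    rw [this, hsk, mul_one, hDd]; exact div_self (by positivity)
  · have : v1 * (D / Q) + v3 * (d * k / Q) = (v1 * D + u * d) / Q := by
      rw [hu]; field_simp
    rw [this, hDu]; field_simp
  · rw [hB, hqq]
  · rw [div_lt_iff₀ hD0]
    have := mul_pos hR0 hd0
    linarith
  · field_simp
  · rw [hv2σ, hqju, hu]; field_simp; ring
  · rw [hv3σ, hqju, hu]; field_simp; linear_combination D * v3 * hsk
  · apply div_neg_of_neg_of_pos _ hQp
    have := mul_pos hd0 hs
    linarith
  · have hck : cinf * (d * k / Q) < v3 := by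
      rw [mul_div_assoc', div_lt_iff₀ hQp]
      have h1 : cinf * (d * k) ≤ cinf * (cinf * u * k) := by
        have : d ≤ cinf * u := by rw [hd]; nlinarith [mul_pos hv10 hR0]
        gcongr
      have h2 : cinf * (cinf * u * k) = v3 * cinf ^ 2 * k ^ 2 := by rw [hu]; ring
      have h3 : v3 * cinf ^ 2 * k ^ 2 ≤ v3 * cinf ^ 2 * 1 := by gcongr
      have h4 : v3 * cinf ^ 2 < v3 * Q := by
        have : cinf ^ 2 < Q := by nlinarith
        gcongr
      linarith
    linarith
  · intro h
    have e : (-(d * s) / Q) ^ 2 + (d * k / Q) ^ 2 = (d / Q) ^ 2 := by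
      have : (-(d * s) / Q) ^ 2 + (d * k / Q) ^ 2 = (d / Q) ^ 2 * (s ^ 2 + k ^ 2) := by
        field_simp
      rw [this, hsk, mul_one]
    have e2 : v3 ^ 2 * (-(d * s) / Q) ^ 2 = v3 ^ 2 * s ^ 2 * (d / Q) ^ 2 := by field_simp
    rw [e, e2] at h
    have hp : (d / Q) ^ 2 ≠ 0 := by positivity
    have := mul_right_cancel₀ hp h
    linarith
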